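/- Let (X,d) be a metric space and T a metrically nonspreading mapping of X into itself. Then T(U) is bounded for every nonempty bounded subset U of X. -/

import Mathlib

/-!
Fix a point `p`. By the triangle inequality through `T p` and `p`, the nonspreading inequality for
the pair `(x, p)` becomes `2a² ≤ (a + c)² + (d + c)²`, where `a = dist (T x) (T p)`,
`c = dist (T p) p` and `d = dist x p`. Only one of the two copies of `a²` is absorbed on the right,
so completing the square gives `(a - c)² ≤ (d + c)² + 2c² ≤ (d + 2c)²` and hence `a ≤ d + 3c`:
`T` increases the distance to a base point by at most an additive constant.
-/

theorem isBounded_image_of_dist_le_monotone {α β : Type*} [PseudoMetricSpace α]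
    [PseudoMetricSpace β] {f : α → β} {φ : ℝ → ℝ} (hφ : Monotone φ) {p : α} {q : β} {s : Set α}
    (hs : Bornology.IsBounded s) (hf : ∀ x ∈ s, dist (f x) q ≤ φ (dist x p)) :
    Bornology.IsBounded (f '' s) := by
  obtain ⟨r, hr⟩ := hs.subset_closedBall p
  refine (Metric.isBounded_iff_subset_closedBall q).2 ⟨φ r, ?_⟩
  rintro _ ⟨x, hx, rfl⟩
  have hxr : dist x p ≤ r := Metric.mem_closedBall.1 (hr hx)
  exact Metric.mem_closedBall.2 ((hf x hx).trans (hφ hxr))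

theorem le_add_three_mul_of_two_mul_sq_le {R : Type*} [CommRing R] [LinearOrder R]
    [IsStrictOrderedRing R] {a c d : R} (hc : 0 ≤ c) (hd : 0 ≤ d)
    (h : 2 * a ^ 2 ≤ (a + c) ^ 2 + (d + c) ^ 2) : a ≤ d + 3 * c := by
  have hsq : (a - c) ^ 2 ≤ (d + 2 * c) ^ 2 :=
    calc (a - c) ^ 2 ≤ (d + c) ^ 2 + 2 * c ^ 2 := by linarith
      _ ≤ (d + c) ^ 2 + 2 * c ^ 2 + (c ^ 2 + 2 * (d * c)) := le_add_of_nonneg_right (by positivity)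
      _ = (d + 2 * c) ^ 2 := by ring
  have hsub : a - c ≤ d + 2 * c := le_of_sq_le_sq hsq (by positivity)
  linarith

theorem dist_map_map_le_of_nonspreading {X : Type*} [PseudoMetricSpace X] {T : X → X} {x p : X}
    (hT : 2 * dist (T x) (T p) ^ 2 ≤ dist (T x) p ^ 2 + dist (T p) x ^ 2) :
    dist (T x) (T p) ≤ dist x p + 3 * dist (T p) p := by
  apply le_add_three_mul_of_two_mul_sq_le dist_nonneg dist_nonneg
  have hTx : dist (T x) p ≤ dist (T x) (T p) + dist (T p) p := dist_triangle _ _ _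
  have hTp : dist (T p) x ≤ dist x p + dist (T p) p := by
    simpa only [dist_comm x, add_comm] using dist_triangle (T p) p x
  calc 2 * dist (T x) (T p) ^ 2 ≤ dist (T x) p ^ 2 + dist (T p) x ^ 2 := hT
    _ ≤ (dist (T x) (T p) + dist (T p) p) ^ 2 + (dist x p + dist (T p) p) ^ 2 := by gcongr

theorem stmt_14_general {X : Type*} [PseudoMetricSpace X] (T : X → X) (p : X) (U : Set X)
    (hT : ∀ x ∈ U, 2 * dist (T x) (T p) ^ 2 ≤ dist (T x) p ^ 2 + dist (T p) x ^ 2)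
    (hU : Bornology.IsBounded U) : Bornology.IsBounded (T '' U) :=
  isBounded_image_of_dist_le_monotone (φ := (· + 3 * dist (T p) p)) add_left_mono hU
    fun x hx ↦ dist_map_map_le_of_nonspreading (hT x hx)

/-- A metrically nonspreading mapping maps every nonempty bounded subset onto a
bounded subset. -/
theorem stmt_14 {X : Type*} [MetricSpace X] (T : X → X)
    (hT : ∀ x y : X, 2 * dist (T x) (T y) ^ 2 ≤ dist (T x) y ^ 2 + dist (T y) x ^ 2)
    (U : Set X) (hU : U.Nonempty) (hUb : Bornology.IsBounded U) :
    Bornology.IsBounded (T '' U) := by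
  obtain ⟨p, -⟩ := hU
  exact stmt_14_general T p U (fun x _ ↦ hT x p) hUb
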